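/- Every real n×n matrix Φ with det Φ > 0 can be written as a product of five symmetric positive definite real n×n matrices, Φ = M₅ M₄ M₃ M₂ M₁. -/

import Mathlib

namespace Matrix

/-- `X` is similar to a diagonal matrix with positive diagonal entries outside `F`. -/
def IsPosDiagonalizable {m : Type*} [Fintype m] [DecidableEq m] (F : Finset ℝ)
    (X : Matrix m m ℝ) : Prop :=
  ∃ d : m → ℝ, (∀ i, 0 < d i ∧ d i ∉ F) ∧ IsConj (diagonal d) X

/-- `A` is a product of two diagonalizable matrices whose eigenvalues are positive and
outside `F`. -/
def IsPosDiagonalizableProduct {m : Type*} [Fintype m] [DecidableEq m] (F : Finset ℝ)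
    (A : Matrix m m ℝ) : Prop :=
  ∃ X Y, IsPosDiagonalizable F X ∧ IsPosDiagonalizable F Y ∧ A = X * Y

section

variable {m k : Type*} [Fintype m] [DecidableEq m] [Fintype k] [DecidableEq k] {F : Finset ℝ}

theorem isConj_of_mul_eq_one {A B S R : Matrix m m ℝ} (hSR : S * R = 1) (h : B = S * A * R) :
    IsConj A B := by
  refine ⟨⟨S, R, hSR, mul_eq_one_comm.mp hSR⟩, ?_⟩
  change S * A = B * S
  rw [h, Matrix.mul_assoc (S * A), mul_eq_one_comm.mp hSR, Matrix.mul_one]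

theorem exists_mul_eq_one_of_isConj {A B : Matrix m m ℝ} (h : IsConj A B) :
    ∃ S R : Matrix m m ℝ, S * R = 1 ∧ R * S = 1 ∧ B = S * A * R := by
  obtain ⟨u, hu⟩ := h
  refine ⟨u, ↑u⁻¹, u.mul_inv, u.inv_mul, ?_⟩
  rw [hu.eq, Matrix.mul_assoc, u.mul_inv, Matrix.mul_one]

theorem det_eq_of_isConj {A B : Matrix m m ℝ} (h : IsConj A B) : A.det = B.det := by
  obtain ⟨S, R, hSR, -, rfl⟩ := exists_mul_eq_one_of_isConj h
  have h1 : S.det * R.det = 1 := by rw [← det_mul, hSR, det_one]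
  rw [det_mul, det_mul]
  linear_combination -A.det * h1

theorem IsPosDiagonalizableProduct.of_isConj {A B : Matrix m m ℝ}
    (hB : IsPosDiagonalizableProduct F B) (h : IsConj A B) :
    IsPosDiagonalizableProduct F A := by
  obtain ⟨S, R, hSR, hRS, rfl⟩ := exists_mul_eq_one_of_isConj h.symm
  obtain ⟨X, Y, ⟨d, hd, hX⟩, ⟨d', hd', hY⟩, rfl⟩ := hB
  refine ⟨S * X * R, S * Y * R, ⟨d, hd, hX.trans (isConj_of_mul_eq_one hSR rfl)⟩,
    ⟨d', hd', hY.trans (isConj_of_mul_eq_one hSR rfl)⟩, ?_⟩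
  calc S * (X * Y) * R = S * X * 1 * Y * R := by simp only [Matrix.mul_one, Matrix.mul_assoc]
    _ = S * X * R * (S * Y * R) := by rw [← hRS]; simp only [Matrix.mul_assoc]

theorem IsPosDiagonalizable.submatrix {X : Matrix m m ℝ} (hX : IsPosDiagonalizable F X)
    (e : k ≃ m) : IsPosDiagonalizable F (X.submatrix e e) := by
  obtain ⟨d, hd, h⟩ := hX
  obtain ⟨S, R, hSR, -, rfl⟩ := exists_mul_eq_one_of_isConj h
  refine ⟨d ∘ e, fun i => hd (e i),
    isConj_of_mul_eq_one (S := S.submatrix e e) (R := R.submatrix e e) ?_ ?_⟩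
  · rw [submatrix_mul_equiv, hSR, submatrix_one_equiv]
  · rw [← submatrix_diagonal_equiv, submatrix_mul_equiv, submatrix_mul_equiv]

theorem IsPosDiagonalizableProduct.submatrix {A : Matrix m m ℝ}
    (hA : IsPosDiagonalizableProduct F A) (e : k ≃ m) :
    IsPosDiagonalizableProduct F (A.submatrix e e) := by
  obtain ⟨X, Y, hX, hY, rfl⟩ := hA
  exact ⟨_, _, hX.submatrix e, hY.submatrix e, (submatrix_mul_equiv _ _ _ _ _).symm⟩

theorem IsPosDiagonalizable.transpose {X : Matrix m m ℝ} (hX : IsPosDiagonalizable F X) :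
    IsPosDiagonalizable F Xᵀ := by
  obtain ⟨d, hd, h⟩ := hX
  obtain ⟨S, R, hSR, hRS, rfl⟩ := exists_mul_eq_one_of_isConj h
  refine ⟨d, hd, isConj_of_mul_eq_one (S := Rᵀ) (R := Sᵀ) ?_ ?_⟩
  · rw [← transpose_mul, hSR, transpose_one]
  · simp [transpose_mul, Matrix.mul_assoc]

theorem IsPosDiagonalizable.exists_posDef_mul_posDef {X : Matrix m m ℝ}
    (hX : IsPosDiagonalizable F X) :
    ∃ P Q : Matrix m m ℝ, P.PosDef ∧ Q.PosDef ∧ X = P * Q := by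
  obtain ⟨d, hd, h⟩ := hX
  obtain ⟨S, R, hSR, hRS, rfl⟩ := exists_mul_eq_one_of_isConj h
  have hS : IsUnit S := ⟨⟨S, R, hSR, hRS⟩, rfl⟩
  have hR : IsUnit R := ⟨⟨R, S, hRS, hSR⟩, rfl⟩
  refine ⟨S * Sᵀ, Rᵀ * diagonal d * R, ?_, ?_, ?_⟩
  · simpa using PosDef.mul_conjTranspose_self S (vecMul_injective_of_isUnit hS)
  · simpa using (PosDef.diagonal fun i => (hd i).1).conjTranspose_mul_mul_same
      (mulVec_injective_of_isUnit hR)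
  · have : Sᵀ * Rᵀ = 1 := by rw [← transpose_mul, hRS, transpose_one]
    calc S * diagonal d * R = S * 1 * diagonal d * R := by rw [Matrix.mul_one]
      _ = _ := by rw [← this]; simp only [Matrix.mul_assoc]

theorem IsPosDiagonalizable.fromBlocks_zero₂₁ {b : ℝ} (hb : 0 < b) (hbF : b ∉ F)
    {X : Matrix m m ℝ} (hX : IsPosDiagonalizable (insert b F) X) (s : Matrix m k ℝ) :
    IsPosDiagonalizable F (fromBlocks X s 0 (b • (1 : Matrix k k ℝ))) := by
  obtain ⟨d, hd, h⟩ := hX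
  obtain ⟨S, R, hSR, hRS, rfl⟩ := exists_mul_eq_one_of_isConj h
  have hne : ∀ i, b - d i ≠ 0 := fun i h0 =>
    (hd i).2 (Finset.mem_insert.mpr (Or.inl (sub_eq_zero.mp h0).symm))
  refine ⟨Sum.elim d fun _ => b, ?_, ?_⟩
  · rintro (i | i)
    · exact ⟨(hd i).1, fun hF => (hd i).2 (Finset.mem_insert_of_mem hF)⟩
    · exact ⟨hb, hbF⟩
  · set z : Matrix m k ℝ := diagonal (fun i => (b - d i)⁻¹) * (R * s) with hz
    have key : b • z - diagonal d * z = R * s := by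
      ext i j
      simp only [hz, sub_apply, smul_apply, diagonal_mul, smul_eq_mul]
      field_simp [hne i]
    refine isConj_of_mul_eq_one (S := fromBlocks S (S * z) 0 1) (R := fromBlocks R (-z) 0 1) ?_ ?_
    · simp [fromBlocks_multiply, hSR, ← fromBlocks_one]
    · have hdiag : diagonal (Sum.elim d fun _ : k => b)
          = fromBlocks (diagonal d) 0 0 (b • (1 : Matrix k k ℝ)) := by
        rw [smul_one_eq_diagonal, fromBlocks_diagonal]
      have hs : s = S * (b • z - diagonal d * z) := by
        rw [key, ← Matrix.mul_assoc, hSR, Matrix.one_mul]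
      rw [hdiag, fromBlocks_multiply, fromBlocks_multiply]
      congr 1
      · simp
      · conv_lhs => rw [hs]
        simp [Matrix.mul_sub, Matrix.mul_assoc]
        abel
      · simp
      · simp

theorem IsPosDiagonalizableProduct.fromBlocks {b : ℝ} (hb : 0 < b) (hbF : b ∉ F)
    {C : Matrix m m ℝ} (hC : IsPosDiagonalizableProduct (insert b F) C) (s : Matrix m k ℝ)
    (r : Matrix k m ℝ) :
    IsPosDiagonalizableProduct F
      (fromBlocks (C + (b * b)⁻¹ • (s * r)) s r ((b * b) • (1 : Matrix k k ℝ))) := by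
  obtain ⟨X, Y, hX, hY, rfl⟩ := hC
  have hY' := (hY.transpose.fromBlocks_zero₂₁ hb hbF (b⁻¹ • rᵀ)).transpose
  refine ⟨_, _, hX.fromBlocks_zero₂₁ hb hbF (b⁻¹ • s), hY', ?_⟩
  have hb0 : b ≠ 0 := hb.ne'
  simp [fromBlocks_transpose, fromBlocks_multiply, smul_smul, hb0]

theorem isConj_fromBlocks (B : Matrix m m ℝ) (s : Matrix m k ℝ) (r : Matrix k m ℝ)
    (D : Matrix k k ℝ) (q : Matrix k m ℝ) :
    IsConj (fromBlocks B s r D)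
      (fromBlocks (B + s * q) s (r + D * q - q * B - q * s * q) (D - q * s)) := by
  refine isConj_of_mul_eq_one (S := fromBlocks 1 0 (-q) 1) (R := fromBlocks 1 0 q 1) ?_ ?_
  · simp [fromBlocks_multiply, ← fromBlocks_one]
  · simp only [fromBlocks_multiply]
    congr 1
    · simp
    · simp
    · simp [Matrix.add_mul]
      abel
    · simp
      abel

theorem det_fromBlocks_add_smul {c : ℝ} (hc : c ≠ 0) (C : Matrix m m ℝ) (s : Matrix m k ℝ)
    (r : Matrix k m ℝ) :
    (fromBlocks (C + c⁻¹ • (s * r)) s r (c • (1 : Matrix k k ℝ))).det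
      = C.det * c ^ Fintype.card k := by
  have : fromBlocks (C + c⁻¹ • (s * r)) s r (c • (1 : Matrix k k ℝ))
      = fromBlocks C (c⁻¹ • s) 0 1 * fromBlocks 1 0 r (c • (1 : Matrix k k ℝ)) := by
    simp [fromBlocks_multiply, smul_smul, hc]
  rw [this, det_mul, det_fromBlocks_zero₂₁, det_fromBlocks_zero₁₂]
  simp

/-- A matrix with a nonzero upper right block is similar to one with the same upper right block,
a prescribed lower right entry, and a nonscalar Schur complement. -/
theorem exists_isConj_fromBlocks (B : Matrix m m ℝ) {s : Matrix m Unit ℝ}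
    (r : Matrix Unit m ℝ) (D : Matrix Unit Unit ℝ) {i : m} (hi : s i () ≠ 0)
    (hdet : (fromBlocks B s r D).det ≠ 0) {c : ℝ} (hc : c ≠ 0) :
    ∃ (C : Matrix m m ℝ) (r' : Matrix Unit m ℝ),
      IsConj (fromBlocks B s r D) (fromBlocks (C + c⁻¹ • (s * r')) s r' (c • 1)) ∧
      (Fintype.card m ≤ 1 ∨ ∀ a : ℝ, C ≠ a • 1) := by
  obtain ⟨C, r', hconj⟩ : ∃ (C : Matrix m m ℝ) (r' : Matrix Unit m ℝ),
      IsConj (fromBlocks B s r D) (fromBlocks (C + c⁻¹ • (s * r')) s r' (c • 1)) := by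
    set q : Matrix Unit m ℝ := of fun _ => Pi.single i ((D () () - c) / s i ()) with hq
    have hqs : D - q * s = c • 1 := by
      ext ⟨⟩ ⟨⟩
      simp [hq, mul_apply, Pi.single_apply, hi]
    have h := isConj_fromBlocks B s r D q
    rw [hqs] at h
    set r' := r + D * q - q * B - q * s * q
    exact ⟨B + s * q - c⁻¹ • (s * r'), r', by rwa [sub_add_cancel]⟩
  by_cases hC : Fintype.card m ≤ 1 ∨ ∀ a : ℝ, C ≠ a • 1
  · exact ⟨C, r', hconj, hC⟩
  push Not at hC
  obtain ⟨hcard, a, rfl⟩ := hC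
  have ha : a ≠ 0 := by
    rintro rfl
    have : Nonempty m := ⟨i⟩
    apply hdet
    rw [det_eq_of_isConj hconj, det_fromBlocks_add_smul hc]
    simp
  have : Nontrivial m := Fintype.one_lt_card_iff_nontrivial.mp hcard
  obtain ⟨j, hj⟩ := exists_ne i
  set q : Matrix Unit m ℝ := of fun _ => Pi.single i (s j ()) - Pi.single j (s i ()) with hq
  have hqs : q * s = 0 := by
    ext ⟨⟩ ⟨⟩
    simp [hq, mul_apply, Pi.single_apply, sub_mul, Finset.sum_sub_distrib, mul_comm (s j ())]
  refine ⟨a • 1 + (a * c⁻¹) • (s * q), r' + c • q - a • q, ?_, Or.inr ?_⟩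
  · refine hconj.trans ?_
    convert isConj_fromBlocks (a • 1 + c⁻¹ • (s * r')) s r' (c • 1) q using 2
    · simp only [Matrix.mul_add, Matrix.mul_sub, Matrix.mul_smul, smul_add, smul_sub, smul_smul,
        inv_mul_cancel₀ hc, one_smul, mul_comm a]
      abel
    · simp [Matrix.mul_add, ← Matrix.mul_assoc, hqs]
    · simp [hqs]
  · intro a' h
    have h1 := congrFun (congrFun h i) j
    simp [hq, mul_apply, hj.symm, hi, ha, hc] at h1

/-- A nonscalar matrix is similar to a nondiagonal one. -/
theorem exists_isConj_offDiag_ne_zero {A : Matrix m m ℝ} (hA : ∀ c : ℝ, A ≠ c • 1)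
    [Nonempty m] : ∃ A', IsConj A A' ∧ ∃ i j, i ≠ j ∧ A' i j ≠ 0 := by
  by_cases h : ∃ i j, i ≠ j ∧ A i j ≠ 0
  · exact ⟨A, IsConj.refl A, h⟩
  push Not at h
  obtain ⟨j⟩ := ‹Nonempty m›
  obtain ⟨i, hi⟩ : ∃ i, A i i ≠ A j j := by
    by_contra! hall
    refine hA (A j j) ?_
    ext k l
    rcases eq_or_ne k l with rfl | hkl
    · simp [hall]
    · simp [h k l hkl, hkl]
  have hij : i ≠ j := fun e => hi (e ▸ rfl)
  refine ⟨_, isConj_of_mul_eq_one (S := transvection i j 1) (R := transvection i j (-1)) ?_ rfl,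
    i, j, hij, ?_⟩
  · simp [transvection_mul_transvection_same, hij]
  · simp [h i j hij, h j i hij.symm, add_neg_eq_zero, hi.symm]

end

theorem isPosDiagonalizableProduct_of_det_pos (n : ℕ) (F : Finset ℝ)
    (A : Matrix (Fin n) (Fin n) ℝ) (hdet : 0 < A.det)
    (hA : n ≤ 1 ∨ ∀ c : ℝ, A ≠ c • 1) : IsPosDiagonalizableProduct F A := by
  induction n generalizing F with
  | zero =>
    exact ⟨1, 1, ⟨1, fun i => i.elim0, by simp [Subsingleton.elim (diagonal _) 1]⟩,
      ⟨1, fun i => i.elim0, by simp [Subsingleton.elim (diagonal _) 1]⟩,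
      Subsingleton.elim _ _⟩
  | succ n ih =>
    by_cases hn : n + 1 ≤ 1
    · obtain rfl : n = 0 := by omega
      rw [det_fin_one] at hdet
      obtain ⟨b, hb, hbF⟩ := (Set.Ioi_infinite (0 : ℝ)).exists_notMem_finset
        (F ∪ F.image (A 0 0 / ·))
      rw [Finset.mem_union, not_or] at hbF
      have hb : 0 < b := hb
      refine ⟨diagonal fun _ => b, diagonal fun _ => A 0 0 / b,
        ⟨_, fun _ => ⟨hb, hbF.1⟩, IsConj.refl _⟩,
        ⟨_, fun _ => ⟨div_pos hdet hb, fun h => hbF.2 (Finset.mem_image.mpr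
          ⟨_, h, div_div_cancel₀ hdet.ne'⟩)⟩, IsConj.refl _⟩, ?_⟩
      ext i j
      fin_cases i; fin_cases j
      simp [mul_div_cancel₀ _ hb.ne']
    obtain ⟨A', hconj, i, j, hij, hne⟩ := exists_isConj_offDiag_ne_zero (hA.resolve_left hn)
    refine IsPosDiagonalizableProduct.of_isConj ?_ hconj
    rw [det_eq_of_isConj hconj] at hdet
    let e : Fin (n + 1) ≃ Fin n ⊕ Unit := (finSuccEquiv' j).trans (Equiv.optionEquivSumPUnit _)
    have hej : e.symm (Sum.inr ()) = j := by simp [e]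
    obtain ⟨l, hl⟩ : ∃ l, e.symm (Sum.inl l) = i := by
      rcases hl : e i with l | ⟨⟩
      · exact ⟨l, by rw [← hl, e.symm_apply_apply]⟩
      · exact absurd (by rw [← hej, ← hl, e.symm_apply_apply]) hij
    have hsub : IsPosDiagonalizableProduct F (A'.submatrix e.symm e.symm) := by
      rw [← det_submatrix_equiv_self e.symm] at hdet
      set M := A'.submatrix e.symm e.symm with hM
      have hs : M.toBlocks₁₂ l () ≠ 0 := by simpa [hM, toBlocks₁₂, hl, hej] using hne
      obtain ⟨b, hb, hbF⟩ := (Set.Ioi_infinite (0 : ℝ)).exists_notMem_finset F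
      have hb : 0 < b := hb
      rw [← fromBlocks_toBlocks M] at hdet ⊢
      obtain ⟨C, r, hCM, hC⟩ := exists_isConj_fromBlocks M.toBlocks₁₁ M.toBlocks₂₁ M.toBlocks₂₂
        hs hdet.ne' (mul_pos hb hb).ne'
      refine IsPosDiagonalizableProduct.of_isConj ?_ hCM
      rw [det_eq_of_isConj hCM, det_fromBlocks_add_smul (mul_pos hb hb).ne'] at hdet
      refine (ih (insert b F) C (pos_of_mul_pos_left hdet (by positivity)) ?_).fromBlocks
        hb hbF _ _
      simpa using hC
    simpa using hsub.submatrix e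

/-- A matrix of positive determinant that is nonscalar, or of size at most one, is a product of
four positive definite matrices. -/
theorem exists_four_posDef_of_det_pos {n : ℕ} (A : Matrix (Fin n) (Fin n) ℝ) (hdet : 0 < A.det)
    (hA : n ≤ 1 ∨ ∀ c : ℝ, A ≠ c • 1) :
    ∃ P₁ P₂ P₃ P₄ : Matrix (Fin n) (Fin n) ℝ,
      P₁.PosDef ∧ P₂.PosDef ∧ P₃.PosDef ∧ P₄.PosDef ∧ A = P₄ * P₃ * P₂ * P₁ := by
  obtain ⟨X, Y, hX, hY, rfl⟩ := isPosDiagonalizableProduct_of_det_pos n ∅ A hdet hA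
  obtain ⟨P₄, P₃, h₄, h₃, rfl⟩ := hX.exists_posDef_mul_posDef
  obtain ⟨P₂, P₁, h₂, h₁, rfl⟩ := hY.exists_posDef_mul_posDef
  exact ⟨P₁, P₂, P₃, P₄, h₁, h₂, h₃, h₄, by simp only [Matrix.mul_assoc]⟩

end Matrix

/-- **Ballantine's factorization theorem.** Every real `n × n` matrix `Φ` with
`det Φ > 0` can be written as a product of five symmetric positive definite
real `n × n` matrices, `Φ = M₅ * M₄ * M₃ * M₂ * M₁`. -/
theorem factorization_into_five_posDef {n : ℕ} (Φ : Matrix (Fin n) (Fin n) ℝ)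
    (hΦ : 0 < Φ.det) :
    ∃ M₁ M₂ M₃ M₄ M₅ : Matrix (Fin n) (Fin n) ℝ,
      M₁.PosDef ∧ M₂.PosDef ∧ M₃.PosDef ∧ M₄.PosDef ∧ M₅.PosDef ∧
      Φ = M₅ * M₄ * M₃ * M₂ * M₁ := by
  by_cases h : n ≤ 1 ∨ ∀ c : ℝ, Φ ≠ c • 1
  · obtain ⟨P₁, P₂, P₃, P₄, h₁, h₂, h₃, h₄, rfl⟩ := Matrix.exists_four_posDef_of_det_pos Φ hΦ h
    exact ⟨P₁, P₂, P₃, P₄, 1, h₁, h₂, h₃, h₄, Matrix.PosDef.one, by rw [Matrix.one_mul]⟩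
  push Not at h
  obtain ⟨hn, c, rfl⟩ := h
  have hc : c ≠ 0 := by
    rintro rfl
    have : Nonempty (Fin n) := ⟨⟨0, by omega⟩⟩
    simp at hΦ
  -- A nonscalar positive definite factor reduces the scalar case to the nonscalar one.
  let d : Fin n → ℝ := fun i => (i : ℝ) + 1
  have hd : ∀ i, 0 < d i := fun i => by positivity
  obtain ⟨P₁, P₂, P₃, P₄, h₁, h₂, h₃, h₄, h⟩ :=
    Matrix.exists_four_posDef_of_det_pos (Matrix.diagonal d * c • 1)
      (by
        rw [Matrix.det_mul, Matrix.det_diagonal]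
        exact mul_pos (Finset.prod_pos fun i _ => hd i) hΦ)
      (by
        refine Or.inr fun a ha => ?_
        have h0 := congrFun (congrFun ha ⟨0, by omega⟩) ⟨0, by omega⟩
        have h1 := congrFun (congrFun ha ⟨1, hn⟩) ⟨1, hn⟩
        simp [d] at h0 h1
        apply hc
        linarith)
  refine ⟨P₁, P₂, P₃, P₄, Matrix.diagonal fun i => (d i)⁻¹, h₁, h₂, h₃, h₄,
    Matrix.PosDef.diagonal fun i => inv_pos.mpr (hd i), ?_⟩
  have hinv : (Matrix.diagonal fun i => (d i)⁻¹) * Matrix.diagonal d = 1 := by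
    simp [Matrix.diagonal_mul_diagonal, fun i => inv_mul_cancel₀ (hd i).ne']
  calc c • 1 = (Matrix.diagonal fun i => (d i)⁻¹) * (Matrix.diagonal d * c • 1) := by
        rw [← Matrix.mul_assoc, hinv, Matrix.one_mul]
    _ = _ := by rw [h]; simp only [Matrix.mul_assoc]
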